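/- arXiv:2402.02538 — 2 statements merged into one kernel-verified Lean document; each statement's English description precedes it below -/
import Mathlib

section
/- If α = (a_1,…,a_n) is a non-decreasing vacillating parking function of length n (i.e., α ∈ VPF_n and a_1 ≤ a_2 ≤ ⋯ ≤ a_n), then i−1 ≤ a_i ≤ i+1 for all i ∈ [n]. -/
/-- One car with (1-indexed) preference `p` attempts to park on a one-way street with
spots `1,…,n` under the `k`-vacillating rule, given the set `occ` of occupied spots:
it parks in spot `p` if unoccupied; otherwise in spot `p - k` if `p - k ≥ 1` and it is
unoccupied; otherwise in spot `p + k` if `p + k ≤ n` and it is unoccupied; otherwise it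
fails to park (`none`). -/
def parkStep (n k : ℕ) (occ : Finset ℕ) (p : ℕ) : Option ℕ :=
  if p ∉ occ then some p
  else if k < p ∧ p - k ∉ occ then some (p - k)
  else if p + k ≤ n ∧ p + k ∉ occ then some (p + k)
  else none

/-- Park the cars whose preference list is given, in order, under the `k`-vacillating
rule on a street with spots `1,…,n`, starting from occupied set `occ`.  Returns the list
of spots occupied by the cars (in the order the cars arrive), or `none` if some car
fails to park. -/
def parkAssign (n k : ℕ) (occ : Finset ℕ) : List ℕ → Option (List ℕ)
  | [] => some []
  | p :: ps =>
    match parkStep n k occ p with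
    | none => none
    | some s => (parkAssign n k (insert s occ) ps).map (s :: ·)

/-- The 1-indexed preference list in `[n]^m` associated to `α : Fin m → Fin n`
(car `i+1` prefers spot `α i + 1`). -/
def prefList {m n : ℕ} (α : Fin m → Fin n) : List ℕ :=
  List.ofFn fun i => (α i : ℕ) + 1

/-- The set of `k`-vacillating parking functions of length `n`:
preference lists in `[n]^n` (encoded as `Fin n → Fin n`) for which all `n` cars park. -/
def VPFk (n k : ℕ) : Finset (Fin n → Fin n) :=
  Finset.univ.filter fun α => (parkAssign n k ∅ (prefList α)).isSome

/-- The set of vacillating parking functions of length `n` (the case `k = 1`). -/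
def VPF (n : ℕ) : Finset (Fin n → Fin n) := VPFk n 1

/-- The set of non-decreasing vacillating parking functions of length `n`. -/
def VPFup (n : ℕ) : Finset (Fin n → Fin n) :=
  (VPF n).filter fun α => ∀ i j : Fin n, i ≤ j → α i ≤ α j

/-!
Cars park in distinct spots, so a full street gives a permutation `σ` of the spots with
`|σ j - α j| ≤ k` for every car `j`. By pigeonhole some car `j ≤ i` has `i ≤ σ j`, and some car
`j ≥ i` has `σ j ≤ i`; comparing `α j` with `α i` by monotonicity bounds `α i` on both sides.
-/

section Pigeonhole

variable {ι : Type*} [LinearOrder ι] {f : ι → ι}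

lemma exists_le_and_le_apply_of_injective [LocallyFiniteOrderBot ι]
    (hf : Function.Injective f) (i : ι) : ∃ j ≤ i, i ≤ f j := by
  by_contra! hlt
  have hmaps : Set.MapsTo f (Finset.Iic i) (Finset.Iio i) := fun j hj =>
    Finset.mem_coe.2 (Finset.mem_Iio.2 (hlt j (Finset.mem_Iic.1 hj)))
  have hcard : (Finset.Iic i).card ≤ (Finset.Iio i).card :=
    Finset.card_le_card_of_injOn f hmaps hf.injOn
  have hssubset : Finset.Iio i ⊂ Finset.Iic i := by
    simpa only [← Finset.coe_ssubset, Finset.coe_Iio, Finset.coe_Iic] using Set.Iio_ssubset_Iic_self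
  exact hcard.not_gt (Finset.card_lt_card hssubset)

lemma exists_ge_and_apply_le_of_injective [LocallyFiniteOrderTop ι]
    (hf : Function.Injective f) (i : ι) : ∃ j ≥ i, f j ≤ i :=
  exists_le_and_le_apply_of_injective (ι := ιᵒᵈ) hf i

end Pigeonhole

section Parking

variable {n k p s : ℕ} {occ : Finset ℕ} {ps spots : List ℕ}

lemma notMem_of_parkStep_eq_some (h : parkStep n k occ p = some s) : s ∉ occ := by
  grind [parkStep]

lemma spot_le_add_of_parkStep_eq_some (h : parkStep n k occ p = some s) : s ≤ p + k := by
  grind [parkStep]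

lemma pref_le_add_of_parkStep_eq_some (h : parkStep n k occ p = some s) : p ≤ s + k := by
  grind [parkStep]

lemma mem_Icc_of_parkStep_eq_some (hp : p ∈ Finset.Icc 1 n)
    (h : parkStep n k occ p = some s) : s ∈ Finset.Icc 1 n := by
  grind [parkStep]

lemma parkAssign_cons_eq_some_iff :
    parkAssign n k occ (p :: ps) = some spots ↔
      ∃ s, parkStep n k occ p = some s ∧
        ∃ rest, parkAssign n k (insert s occ) ps = some rest ∧ s :: rest = spots := by
  cases hs : parkStep n k occ p <;> simp [parkAssign, hs]

lemma nodup_and_forall_notMem_of_parkAssign_eq_some (h : parkAssign n k occ ps = some spots) :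
    spots.Nodup ∧ ∀ s ∈ spots, s ∉ occ := by
  induction ps generalizing occ spots with
  | nil =>
    obtain rfl := Option.some.inj h
    simp
  | cons p ps ih =>
    obtain ⟨s, hs, rest, hrest, rfl⟩ := parkAssign_cons_eq_some_iff.1 h
    obtain ⟨hnodup, hfree⟩ := ih hrest
    have hs_rest : s ∉ rest := fun hmem => hfree s hmem (Finset.mem_insert_self s occ)
    exact ⟨List.nodup_cons.2 ⟨hs_rest, hnodup⟩, List.forall_mem_cons.2
      ⟨notMem_of_parkStep_eq_some hs, fun t ht hocc => hfree t ht (Finset.mem_insert_of_mem hocc)⟩⟩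

lemma forall₂_of_parkAssign_eq_some {R : ℕ → ℕ → Prop}
    (hR : ∀ occ, ∀ p ∈ ps, ∀ s, parkStep n k occ p = some s → R p s)
    (h : parkAssign n k occ ps = some spots) : List.Forall₂ R ps spots := by
  induction ps generalizing occ spots with
  | nil =>
    obtain rfl := Option.some.inj h
    exact .nil
  | cons p ps ih =>
    obtain ⟨s, hs, rest, hrest, rfl⟩ := parkAssign_cons_eq_some_iff.1 h
    exact .cons (hR occ p List.mem_cons_self s hs)
      (ih (fun occ q hq => hR occ q (List.mem_cons_of_mem p hq)) hrest)

end Parking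

lemma mem_Icc_of_mem_prefList {m n p : ℕ} {α : Fin m → Fin n} (hp : p ∈ prefList α) :
    p ∈ Finset.Icc 1 n := by
  obtain ⟨i, rfl⟩ := List.mem_ofFn.1 hp
  exact Finset.mem_Icc.2 ⟨Nat.succ_pos _, (α i).isLt⟩

lemma exists_injective_near_of_parkAssign_isSome {m n k : ℕ} {α : Fin m → Fin n}
    (h : (parkAssign n k ∅ (prefList α)).isSome) :
    ∃ σ : Fin m → Fin n, Function.Injective σ ∧
      ∀ i, (σ i : ℕ) ≤ α i + k ∧ (α i : ℕ) ≤ σ i + k := by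
  obtain ⟨spots, hspots⟩ := Option.isSome_iff_exists.1 h
  have hnodup : spots.Nodup := (nodup_and_forall_notMem_of_parkAssign_eq_some hspots).1
  have hnear : List.Forall₂ (fun p s => s ∈ Finset.Icc 1 n ∧ s ≤ p + k ∧ p ≤ s + k)
      (prefList α) spots :=
    forall₂_of_parkAssign_eq_some (fun _ _ hp _ hs =>
      ⟨mem_Icc_of_parkStep_eq_some (mem_Icc_of_mem_prefList hp) hs,
        spot_le_add_of_parkStep_eq_some hs, pref_le_add_of_parkStep_eq_some hs⟩) hspots
  have hlength : spots.length = m := by simpa [prefList] using hnear.length_eq.symm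
  subst hlength
  have hspot (i : Fin spots.length) : spots[i] ∈ Finset.Icc 1 n ∧
      spots[i] ≤ (α i + 1 : ℕ) + k ∧ (α i + 1 : ℕ) ≤ spots[i] + k := by
    simpa [prefList] using hnear.get (i := i) (by simp [prefList]) i.isLt
  simp only [Finset.mem_Icc] at hspot
  refine ⟨fun i => ⟨spots[i] - 1, by grind⟩, fun i j hij => ?_, fun i => by grind⟩
  have hval : spots[i] = spots[j] := by grind
  exact List.nodup_iff_injective_get.1 hnodup hval

theorem nondecreasing_vpf_bounds_general {n k : ℕ} {α : Fin n → Fin n} (hα : α ∈ VPFk n k)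
    (hmono : Monotone α) (i : Fin n) : (i : ℕ) ≤ α i + k ∧ (α i : ℕ) ≤ i + k := by
  obtain ⟨σ, hσ, hnear⟩ :=
    exists_injective_near_of_parkAssign_isSome (Finset.mem_filter.1 hα).2
  constructor
  · obtain ⟨j, hji, hij⟩ := exists_le_and_le_apply_of_injective hσ i
    calc (i : ℕ) ≤ σ j := hij
      _ ≤ α j + k := (hnear j).1
      _ ≤ α i + k := Nat.add_le_add_right (hmono hji) k
  · obtain ⟨j, hij, hji⟩ := exists_ge_and_apply_le_of_injective hσ i
    calc (α i : ℕ) ≤ α j := hmono hij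
      _ ≤ σ j + k := (hnear j).2
      _ ≤ i + k := Nat.add_le_add_right hji k

/-- If `α` is a non-decreasing vacillating parking function of
length `n`, then `i − 1 ≤ a_i ≤ i + 1` for all `i ∈ [n]`.  Here car `i ∈ [n]`
corresponds to index `i - 1 : Fin n` and its (1-indexed) preference is `α (i-1) + 1`,
so the claim reads `(i : ℕ) ≤ (α i : ℕ) + 1 ≤ (i : ℕ) + 2` for `i : Fin n`. -/
theorem nondecreasing_vpf_bounds (n : ℕ) (α : Fin n → Fin n) (hα : α ∈ VPF n)
    (hmono : ∀ i j : Fin n, i ≤ j → α i ≤ α j) :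
    ∀ i : Fin n, (i : ℕ) ≤ (α i : ℕ) + 1 ∧ (α i : ℕ) + 1 ≤ (i : ℕ) + 2 :=
  fun i => (nondecreasing_vpf_bounds_general hα hmono i).imp_right Nat.succ_le_succ
end

section
/- Let (p_n) be the sequence of numerators of the convergents of the continued fraction expansion √2 = [1;2,2,2,…], i.e., p_1 = 1, p_2 = 3, and p_n = 2·p_{n-1} + p_{n-2} for n ≥ 3. Then for every integer n ≥ 1, the number of non-decreasing vacillating parking functions of length n equals p_n: |VPF_n^↑| = p_n. -/
/-!
Cars arriving in non-decreasing order of preference, on a street where exactly the spots `1, …, m`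
are occupied, can fill the remaining spots in only two ways. Either the first car prefers `m`
(possible only if `m ≥ 1`) or `m + 1`, and parks in `m + 1`; or the first two cars both prefer
`m + 2` and park in `m + 2` and then `m + 1`, since any later preference would leave spot `m + 1`
empty for good. Hence the number of fillings with `m ≥ 1` satisfies the Pell recursion in the number
of free spots, and allowing for the single choice at `m = 0`, the count for the empty street is a
sum of two consecutive Pell numbers, which is a numerator of a convergent of `√2`.
-/

/-- The Pell numbers `0, 1, 2, 5, 12, …`, which are the denominators of the convergents of `√2`
preceded by `0`. -/
def pell : ℕ → ℕ
  | 0 => 0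
  | 1 => 1
  | r + 2 => 2 * pell (r + 1) + pell r

theorem eq_pell_add_pell {p : ℕ → ℕ} (hp1 : p 1 = 1) (hp2 : p 2 = 3)
    (hp : ∀ n : ℕ, 3 ≤ n → p n = 2 * p (n - 1) + p (n - 2)) (r : ℕ) :
    p (r + 1) = pell (r + 1) + pell r := by
  induction r using Nat.twoStepInduction with
  | zero => simpa [pell] using hp1
  | one => simpa [pell] using hp2
  | more r ih ih' =>
    calc p (r + 3) = 2 * p (r + 2) + p (r + 1) := hp (r + 3) (by omega)
      _ = 2 * (pell (r + 2) + pell (r + 1)) + (pell (r + 1) + pell r) := by rw [ih, ih']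
      _ = pell (r + 3) + pell (r + 2) := by simp only [pell]; ring

section Parking

variable {n k m p s : ℕ} {occ : Finset ℕ} {l : List ℕ}

theorem parkStep_of_notMem (hp : p ∉ occ) : parkStep n k occ p = some p :=
  if_pos hp

theorem parkStep_of_mem_of_sub_notMem (hp : p ∈ occ) (hk : k < p) (hpk : p - k ∉ occ) :
    parkStep n k occ p = some (p - k) := by
  rw [parkStep, if_neg (not_not_intro hp), if_pos ⟨hk, hpk⟩]

theorem parkStep_Icc_self (hm : 1 ≤ m) (hmn : m < n) :
    parkStep n 1 (Finset.Icc 1 m) m = some (m + 1) := by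
  have hself : ¬ m ∉ Finset.Icc 1 m := by simp [hm]
  have hleft : ¬ (1 < m ∧ m - 1 ∉ Finset.Icc 1 m) := by simp only [Finset.mem_Icc]; omega
  have hright : m + 1 ≤ n ∧ m + 1 ∉ Finset.Icc 1 m := by simp [Nat.succ_le_of_lt hmn]
  rw [parkStep, if_neg hself, if_neg hleft, if_pos hright]

theorem parkStep_Icc_eq_none (hp : 1 ≤ p) (hpm : p < m) :
    parkStep n 1 (Finset.Icc 1 m) p = none := by
  simp only [parkStep, Finset.mem_Icc]
  split_ifs <;> first | rfl | omega

theorem of_parkStep_eq_some (hp : 1 ≤ p ∧ p ≤ n) (h : parkStep n k occ p = some s) :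
    s ∉ occ ∧ s ∈ Finset.Icc 1 n ∧ p ≤ s + k := by
  rw [Finset.mem_Icc]
  unfold parkStep at h
  split_ifs at h with hself hleft hright <;> cases h
  · exact ⟨hleft.2, by omega, by omega⟩
  · exact ⟨hright.2, by omega, by omega⟩
  · exact ⟨hself, hp, by omega⟩

theorem isSome_parkAssign_cons :
    (parkAssign n k occ (p :: l)).isSome ↔
      ∃ s, parkStep n k occ p = some s ∧ (parkAssign n k (insert s occ) l).isSome := by
  rw [parkAssign]
  cases parkStep n k occ p <;> simp

theorem isSome_parkAssign_cons_of_parkStep (h : parkStep n k occ p = some s) :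
    (parkAssign n k occ (p :: l)).isSome ↔ (parkAssign n k (insert s occ) l).isSome := by
  simp [isSome_parkAssign_cons, h]

/-- By counting, every free spot gets filled, and no car parks more than `k` spots to the left of
its preference. -/
theorem exists_mem_le_add_of_isSome_parkAssign (hocc : occ ⊆ Finset.Icc 1 n)
    (hl : ∀ p ∈ l, 1 ≤ p ∧ p ≤ n) (hcard : n ≤ occ.card + l.length)
    (hpark : (parkAssign n k occ l).isSome) (hs : s ∈ Finset.Icc 1 n) (hsocc : s ∉ occ) :
    ∃ p ∈ l, p ≤ s + k := by
  induction l generalizing occ with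
  | nil =>
    have hfull : occ = Finset.Icc 1 n :=
      Finset.eq_of_subset_of_card_le hocc (by simpa using hcard)
    exact absurd (hfull ▸ hs) hsocc
  | cons a t ih =>
    obtain ⟨x, hx, hpark⟩ := isSome_parkAssign_cons.1 hpark
    obtain ⟨hxocc, hxn, hax⟩ := of_parkStep_eq_some (hl a List.mem_cons_self) hx
    by_cases hsx : s = x
    · exact ⟨a, List.mem_cons_self, hsx ▸ hax⟩
    · obtain ⟨p, hpt, hps⟩ := ih (Finset.insert_subset hxn hocc)
        (fun p hp => hl p (List.mem_cons_of_mem a hp))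
        (by rw [Finset.card_insert_of_notMem hxocc]; simp only [List.length_cons] at hcard; omega)
        hpark (by simp [hsx, hsocc])
      exact ⟨p, List.mem_cons_of_mem a hpt, hps⟩

theorem isSome_parkAssign_Icc_cons (hp : p ∈ Finset.Icc (max m 1) (m + 1)) (hmn : m < n) :
    (parkAssign n 1 (Finset.Icc 1 m) (p :: l)).isSome ↔
      (parkAssign n 1 (Finset.Icc 1 (m + 1)) l).isSome := by
  have hstep : parkStep n 1 (Finset.Icc 1 m) p = some (m + 1) := by
    rw [Finset.mem_Icc] at hp
    obtain rfl | rfl : p = m ∨ p = m + 1 := by omega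
    · exact parkStep_Icc_self (by omega) hmn
    · exact parkStep_of_notMem (by simp)
  rw [isSome_parkAssign_cons_of_parkStep hstep,
    Finset.insert_Icc_right_eq_Icc_add_one (Nat.le_add_left 1 m)]

theorem isSome_parkAssign_Icc_cons_cons :
    (parkAssign n 1 (Finset.Icc 1 m) ((m + 2) :: (m + 2) :: l)).isSome ↔
      (parkAssign n 1 (Finset.Icc 1 (m + 2)) l).isSome := by
  have hfirst : parkStep n 1 (Finset.Icc 1 m) (m + 2) = some (m + 2) :=
    parkStep_of_notMem (by simp)
  have hsecond : parkStep n 1 (insert (m + 2) (Finset.Icc 1 m)) (m + 2) = some (m + 1) :=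
    parkStep_of_mem_of_sub_notMem (by simp) (by omega) (by simp)
  have hocc : insert (m + 2) (Finset.Icc 1 (m + 1)) = Finset.Icc 1 (m + 2) :=
    Finset.insert_Icc_right_eq_Icc_add_one (Nat.le_add_left 1 (m + 1))
  rw [isSome_parkAssign_cons_of_parkStep hfirst, isSome_parkAssign_cons_of_parkStep hsecond,
    Finset.insert_comm, Finset.insert_Icc_right_eq_Icc_add_one (Nat.le_add_left 1 m), hocc]

end Parking

/-- The non-decreasing lists of preferences with which `n - m` cars fill the free spots of a street
with spots `1, …, n` of which exactly `1, …, m` are occupied. The number of cars is prescribed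
without truncated subtraction, so there are no such lists if `n < m`. -/
def nondecreasingFillings (n m : ℕ) : Set (List ℕ) :=
  {l | m + l.length = n ∧ (∀ p ∈ l, 1 ≤ p ∧ p ≤ n) ∧ l.Pairwise (· ≤ ·) ∧
    (parkAssign n 1 (Finset.Icc 1 m) l).isSome}

section Fillings

variable {n m a : ℕ} {l : List ℕ}

theorem nondecreasingFillings_eq_empty (h : n < m) : nondecreasingFillings n m = ∅ := by
  rw [Set.eq_empty_iff_forall_notMem]
  rintro l ⟨hlen, -⟩
  omega

theorem nondecreasingFillings_self (n : ℕ) : nondecreasingFillings n n = {[]} := by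
  ext l
  simp only [nondecreasingFillings, Set.mem_ofPred_eq, Set.mem_singleton_iff]
  constructor
  · rintro ⟨hlen, -⟩
    exact List.length_eq_zero_iff.1 (by omega)
  · rintro rfl
    simp [parkAssign]

theorem le_of_mem_nondecreasingFillings (hl : l ∈ nondecreasingFillings n m) :
    ∀ p ∈ l, m ≤ p := by
  obtain ⟨-, hbound, hsort, hpark⟩ := hl
  cases l with
  | nil => simp
  | cons a t =>
    obtain ⟨x, hx, -⟩ := isSome_parkAssign_cons.1 hpark
    have hma : m ≤ a := by
      by_contra! hlt
      simp [parkStep_Icc_eq_none (hbound a List.mem_cons_self).1 hlt] at hx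
    rw [List.forall_mem_cons]
    exact ⟨hma, fun p hp => hma.trans (List.rel_of_pairwise_cons hsort hp)⟩

theorem cons_mem_nondecreasingFillings (ha : a ∈ Finset.Icc (max m 1) (m + 1)) :
    a :: l ∈ nondecreasingFillings n m ↔ l ∈ nondecreasingFillings n (m + 1) := by
  have ha' := Finset.mem_Icc.1 ha
  constructor
  · rintro ⟨hlen, hbound, hsort, hpark⟩
    rw [List.length_cons] at hlen
    exact ⟨by omega, (List.forall_mem_cons.1 hbound).2, hsort.of_cons,
      (isSome_parkAssign_Icc_cons ha (by omega)).1 hpark⟩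
  · intro hl
    have hal : ∀ p ∈ l, a ≤ p := fun p hp =>
      ha'.2.trans (le_of_mem_nondecreasingFillings hl p hp)
    obtain ⟨hlen, hbound, hsort, hpark⟩ := hl
    exact ⟨by rw [List.length_cons]; omega,
      List.forall_mem_cons.2 ⟨by omega, hbound⟩, List.pairwise_cons.2 ⟨hal, hsort⟩,
      (isSome_parkAssign_Icc_cons ha (by omega)).2 hpark⟩

theorem cons_cons_mem_nondecreasingFillings :
    (m + 2) :: (m + 2) :: l ∈ nondecreasingFillings n m ↔ l ∈ nondecreasingFillings n (m + 2) := by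
  constructor
  · rintro ⟨hlen, hbound, hsort, hpark⟩
    simp only [List.length_cons] at hlen
    exact ⟨by omega, fun p hp => hbound p (by simp [hp]), hsort.of_cons.of_cons,
      isSome_parkAssign_Icc_cons_cons.1 hpark⟩
  · intro hl
    have hml := le_of_mem_nondecreasingFillings hl
    obtain ⟨hlen, hbound, hsort, hpark⟩ := hl
    refine ⟨by simp only [List.length_cons]; omega, ?_, ?_,
      isSome_parkAssign_Icc_cons_cons.2 hpark⟩
    · simp only [List.forall_mem_cons]
      exact ⟨by omega, by omega, hbound⟩
    · simp only [List.pairwise_cons, List.forall_mem_cons]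
      exact ⟨⟨le_rfl, hml⟩, hml, hsort⟩

theorem eq_cons_of_cons_mem_nondecreasingFillings (hl : a :: l ∈ nondecreasingFillings n m)
    (ha : m + 2 ≤ a) : a = m + 2 ∧ ∃ u, l = (m + 2) :: u := by
  obtain ⟨hlen, hbound, hsort, hpark⟩ := hl
  rw [List.length_cons] at hlen
  rw [List.forall_mem_cons] at hbound
  have haocc : a ∉ Finset.Icc 1 m := by simp only [Finset.mem_Icc]; omega
  -- Spot `m + 1` is still free after the first car has parked in spot `a`.
  obtain ⟨p, hpl, hpm⟩ : ∃ p ∈ l, p ≤ m + 2 := by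
    refine exists_mem_le_add_of_isSome_parkAssign (s := m + 1) ?_ hbound.2 ?_
      ((isSome_parkAssign_cons_of_parkStep (parkStep_of_notMem haocc)).1 hpark) ?_ ?_
    · intro x
      simp only [Finset.mem_insert, Finset.mem_Icc]
      omega
    · rw [Finset.card_insert_of_notMem haocc, Nat.card_Icc]
      omega
    · simp only [Finset.mem_Icc]
      omega
    · simp only [Finset.mem_insert, Finset.mem_Icc]
      omega
  have hap : a ≤ p := List.rel_of_pairwise_cons hsort hpl
  cases l with
  | nil => simp at hpl
  | cons b u =>
    have hab : a ≤ b := List.rel_of_pairwise_cons hsort List.mem_cons_self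
    have hbp : b ≤ p := by
      rcases List.mem_cons.1 hpl with rfl | hpu
      · exact le_rfl
      · exact List.rel_of_pairwise_cons hsort.of_cons hpu
    obtain rfl : b = m + 2 := by omega
    exact ⟨by omega, u, rfl⟩

theorem nondecreasingFillings_eq_union (hmn : m < n) :
    nondecreasingFillings n m =
      Set.image2 List.cons (Finset.Icc (max m 1) (m + 1)) (nondecreasingFillings n (m + 1)) ∪
        (fun l => (m + 2) :: (m + 2) :: l) '' nondecreasingFillings n (m + 2) := by
  apply Set.Subset.antisymm
  · rintro (_ | ⟨a, l⟩) hl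
    · exact absurd hl.1 hmn.ne
    · by_cases ha : a ≤ m + 1
      · have hma := le_of_mem_nondecreasingFillings hl a List.mem_cons_self
        have ha1 := (hl.2.1 a List.mem_cons_self).1
        have ha' : a ∈ Finset.Icc (max m 1) (m + 1) := Finset.mem_Icc.2 ⟨max_le hma ha1, ha⟩
        exact .inl ⟨a, ha', l, (cons_mem_nondecreasingFillings ha').1 hl, rfl⟩
      · obtain ⟨rfl, u, rfl⟩ := eq_cons_of_cons_mem_nondecreasingFillings hl (by omega)
        exact .inr ⟨u, cons_cons_mem_nondecreasingFillings.1 hl, rfl⟩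
  · rintro _ (⟨a, ha, l, hl, rfl⟩ | ⟨l, hl, rfl⟩)
    · exact (cons_mem_nondecreasingFillings ha).2 hl
    · exact cons_cons_mem_nondecreasingFillings.2 hl

theorem encard_nondecreasingFillings (hmn : m < n) :
    (nondecreasingFillings n m).encard =
      (Finset.Icc (max m 1) (m + 1)).card * (nondecreasingFillings n (m + 1)).encard +
        (nondecreasingFillings n (m + 2)).encard := by
  have hdisj : Disjoint
      (Set.image2 List.cons (Finset.Icc (max m 1) (m + 1)) (nondecreasingFillings n (m + 1)))
      ((fun l => (m + 2) :: (m + 2) :: l) '' nondecreasingFillings n (m + 2)) := by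
    rw [Set.disjoint_left]
    rintro _ ⟨a, ha, l, -, rfl⟩ ⟨u, -, hu⟩
    have ham := (Finset.mem_Icc.1 ha).2
    have := (List.cons.inj hu).1
    omega
  have hcons : Function.Injective fun x : ℕ × List ℕ => x.1 :: x.2 := fun x y h =>
    Prod.ext (List.cons.inj h).1 (List.cons.inj h).2
  have hcons₂ : Function.Injective fun l => (m + 2) :: (m + 2) :: l :=
    List.cons_injective.comp List.cons_injective
  rw [nondecreasingFillings_eq_union hmn, Set.encard_union_eq hdisj, hcons₂.encard_image,
    ← Set.image_prod, hcons.encard_image, Set.encard_prod, Set.encard_coe_eq_coe_finsetCard]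

theorem encard_nondecreasingFillings_add_succ (m r : ℕ) :
    (nondecreasingFillings (m + r) (m + 1)).encard = pell r := by
  induction r using Nat.twoStepInduction generalizing m with
  | zero => simp [nondecreasingFillings_eq_empty, pell]
  | one => simp [nondecreasingFillings_self, pell]
  | more r ih ih' =>
    have hchoices : (Finset.Icc (max (m + 1) 1) (m + 1 + 1)).card = 2 := by simp
    rw [encard_nondecreasingFillings (by omega), hchoices,
      show m + (r + 2) = m + 1 + (r + 1) by ring, ih',
      show m + 1 + (r + 1) = m + 2 + r by ring, ih]
    simp [pell]

theorem encard_nondecreasingFillings_zero (r : ℕ) :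
    (nondecreasingFillings (r + 1) 0).encard = pell (r + 1) + pell r := by
  have h₁ := encard_nondecreasingFillings_add_succ 0 (r + 1)
  have h₂ := encard_nondecreasingFillings_add_succ 1 r
  rw [zero_add] at h₁
  rw [add_comm 1 r] at h₂
  rw [encard_nondecreasingFillings r.succ_pos, h₁, h₂]
  simp

end Fillings

section PrefList

variable {m n : ℕ}

theorem prefList_injective : Function.Injective (prefList : (Fin m → Fin n) → List ℕ) :=
  fun α β h => funext fun i => by
    simpa [Fin.ext_iff] using congrFun (List.ofFn_injective h) i

theorem mem_range_prefList {l : List ℕ} :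
    l ∈ Set.range (prefList : (Fin m → Fin n) → List ℕ) ↔
      l.length = m ∧ ∀ p ∈ l, 1 ≤ p ∧ p ≤ n := by
  constructor
  · rintro ⟨α, rfl⟩
    simp only [prefList, List.length_ofFn, List.forall_mem_ofFn_iff, true_and]
    omega
  · rintro ⟨rfl, hl⟩
    have hget (i : Fin l.length) : 1 ≤ l.get i ∧ l.get i ≤ n := hl _ (l.get_mem i)
    refine ⟨fun i => ⟨l.get i - 1, by have := hget i; omega⟩, ?_⟩
    rw [prefList]
    simp only [Nat.sub_add_cancel (hget _).1, List.ofFn_get]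

theorem pairwise_le_prefList {α : Fin m → Fin n} :
    (prefList α).Pairwise (· ≤ ·) ↔ Monotone α := by
  rw [← List.sortedLE_iff_pairwise, prefList, List.sortedLE_ofFn_iff]
  simp only [Monotone, add_le_add_iff_right, Fin.val_fin_le]

theorem prefList_mem_nondecreasingFillings {α : Fin n → Fin n} :
    prefList α ∈ nondecreasingFillings n 0 ↔ α ∈ VPFup n := by
  obtain ⟨hlen, hbound⟩ := mem_range_prefList.1 (Set.mem_range_self α)
  have hmem : α ∈ VPFup n ↔ (parkAssign n 1 ∅ (prefList α)).isSome ∧ Monotone α := by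
    simp only [VPFup, VPF, VPFk, Finset.mem_filter, Finset.mem_univ, true_and]
    rfl
  rw [hmem, ← pairwise_le_prefList]
  exact ⟨fun ⟨_, _, hsort, hpark⟩ => ⟨hpark, hsort⟩,
    fun ⟨hpark, hsort⟩ => ⟨by rw [hlen, zero_add], hbound, hsort, hpark⟩⟩

theorem image_prefList_VPFup (n : ℕ) :
    prefList '' (VPFup n : Set (Fin n → Fin n)) = nondecreasingFillings n 0 := by
  ext l
  constructor
  · rintro ⟨α, hα, rfl⟩
    exact prefList_mem_nondecreasingFillings.2 hα
  · intro hl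
    obtain ⟨α, rfl⟩ : l ∈ Set.range (prefList : (Fin n → Fin n) → List ℕ) :=
      mem_range_prefList.2 ⟨by simpa using hl.1, hl.2.1⟩
    exact ⟨α, prefList_mem_nondecreasingFillings.1 hl, rfl⟩

end PrefList

theorem card_VPFup_add_one (r : ℕ) : (VPFup (r + 1)).card = pell (r + 1) + pell r := by
  have h : ((VPFup (r + 1)).card : ℕ∞) = pell (r + 1) + pell r := by
    rw [← encard_nondecreasingFillings_zero, ← image_prefList_VPFup,
      prefList_injective.encard_image, Set.encard_coe_eq_coe_finsetCard]
  exact_mod_cast h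

/-- If `p` is the sequence of numerators of the convergents of the
continued fraction `√2 = [1;2,2,2,…]` (so `p 1 = 1`, `p 2 = 3`, and
`p n = 2·p (n-1) + p (n-2)` for `n ≥ 3`), then `|VPF_n^↑| = p n` for all `n ≥ 1`. -/
theorem vpfup_card_eq_sqrt_two_convergent_numerator (p : ℕ → ℕ)
    (hp1 : p 1 = 1) (hp2 : p 2 = 3)
    (hp : ∀ n : ℕ, 3 ≤ n → p n = 2 * p (n-1) + p (n-2)) :
    ∀ n : ℕ, 1 ≤ n → (VPFup n).card = p n := by
  intro n hn
  obtain ⟨r, rfl⟩ := Nat.exists_eq_add_of_le' hn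
  rw [card_VPFup_add_one, eq_pell_add_pell hp1 hp2 hp]
end
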